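/- Density sampling (operator Chernoff bound for ensembles): let {(q_j, ρ_j)}_{j ∈ Fin m} be an ensemble of density matrices on ℂ^d with q_j > 0, average state ρ = ∑_j q_j ρ_j, and Holevo information χ = S(ρ) − ∑_j q_j S(ρ_j). Then for every ε, δ > 0 there exists n₀ such that for all n ≥ n₀ and all N ≥ 2^{n(χ+δ)}, the following holds: if X_1,…,X_N are independent random matrices, each equal to the tensor-product matrix ρ_J (with entries (ρ_J)_{K,L} = ∏_{t=1}^n (ρ_{J_t})_{K_t L_t} on the (Fin d)^n-indexed space) with probability q_J = ∏_{t=1}^n q_{J_t} for J ∈ (Fin m)^n, then with probability at least 1 − ε one has ‖(1/N)·∑_{k=1}^N X_k − ρ^{⊗n}‖₁ ≤ ε, where ρ^{⊗n} has entries (ρ^{⊗n})_{K,L} = ∏_{t=1}^n ρ_{K_t L_t}. -/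

import Mathlib

open scoped ComplexConjugate ComplexOrder

/-- A density matrix: positive semidefinite with trace one. -/
def IsDensityMatrix {n : Type*} [Fintype n] (ρ : Matrix n n ℂ) : Prop :=
  ρ.PosSemidef ∧ ρ.trace = 1

/-- The von Neumann entropy (in bits) of a (Hermitian) matrix:
`S(ρ) = −∑ᵢ λᵢ log₂ λᵢ` over the eigenvalues, with `0·log₂ 0 = 0`. -/
noncomputable def vnEntropy {n : Type*} [Fintype n] [DecidableEq n]
    (ρ : Matrix n n ℂ) : ℝ :=
  if h : ρ.IsHermitian then -∑ i, h.eigenvalues i * Real.logb 2 (h.eigenvalues i) else 0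

/-- The trace norm of a Hermitian matrix: the sum of the absolute values of
its eigenvalues. -/
noncomputable def traceNorm {n : Type*} [Fintype n] [DecidableEq n]
    (M : Matrix n n ℂ) : ℝ :=
  if h : M.IsHermitian then ∑ i, |h.eigenvalues i| else 0

/-- The tensor-product matrix `ρ_{J_1} ⊗ ⋯ ⊗ ρ_{J_n}` associated to a sequence
`J ∈ (Fin m)^n`, with entries `(ρ_J)_{K,L} = ∏_t (ρ_{J_t})_{K_t L_t}`. -/
noncomputable def tensorWord {m d n : ℕ} (ρs : Fin m → Matrix (Fin d) (Fin d) ℂ)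
    (J : Fin n → Fin m) : Matrix (Fin n → Fin d) (Fin n → Fin d) ℂ :=
  Matrix.of fun K L => ∏ t, ρs (J t) (K t) (L t)

/-- The `n`-fold tensor power `ρ^{⊗n}` of a single matrix. -/
noncomputable def tensorPow {d : ℕ} (ρ : Matrix (Fin d) (Fin d) ℂ) (n : ℕ) :
    Matrix (Fin n → Fin d) (Fin n → Fin d) ℂ :=
  Matrix.of fun K L => ∏ t, ρ (K t) (L t)

/-!
Write `E‖·‖` for the expected trace distance between the empirical mean of the `N` samples and
`ρ^{⊗n}`. Diagonalize every `ρ_J` and `ρ^{⊗n}`: the spectra are product distributions, so by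
Chebyshev's inequality for log-likelihoods they concentrate on eigenvalues of size about `2^{-nH}`,
respectively `2^{-nS}`, where `H` is the average entropy of the ensemble and `S = H + χ` the entropy
of its mean. Discard the eigenvalues of each `ρ_J` above `2^{-n(H-η)}` and let `P` project onto the
eigenspaces of `ρ^{⊗n}` with eigenvalues at least `2^{-n(S+η)}`, so that `tr P ≤ 2^{n(S+η)}`. The
truncated samples have squared Hilbert–Schmidt norm at most `2^{-n(H-η)}`; as variances of
independent samples add, Cauchy–Schwarz on the range of `P` bounds their contribution by
`√(2^{n(S+η)} 2^{-n(H-η)} / N) ≤ √(2^{-nη})` when `δ = 3η`. The discarded parts have vanishing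
trace, the parts off `P` are controlled by the gentle measurement inequality, and Markov's
inequality turns `E‖·‖ → 0` into the probability bound.
-/

section WeightedMean

variable {α E F : Type*} [Fintype α] [AddCommGroup E] [Module ℝ E] [AddCommGroup F] [Module ℝ F]

/-- The expectation `∑ a, p a • X a` of a vector-valued random variable `X` on a finite set carrying
the weights `p`. The weights are arbitrary reals; for a probability distribution one has
`p ∈ stdSimplex ℝ α`. -/
def weightedMean (p : α → ℝ) (X : α → E) : E :=
  ∑ a, p a • X a

theorem weightedMean_add (p : α → ℝ) (X Y : α → E) :
    weightedMean p (fun a => X a + Y a) = weightedMean p X + weightedMean p Y := by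
  simp [weightedMean, Finset.sum_add_distrib]

theorem weightedMean_sub (p : α → ℝ) (X Y : α → E) :
    weightedMean p (fun a => X a - Y a) = weightedMean p X - weightedMean p Y := by
  simp [weightedMean, smul_sub]

theorem weightedMean_const_mul (p : α → ℝ) (c : ℝ) (X : α → ℝ) :
    weightedMean p (fun a => c * X a) = c * weightedMean p X := by
  simp [weightedMean, Finset.mul_sum, mul_left_comm]

theorem weightedMean_const {p : α → ℝ} (hp : ∑ a, p a = 1) (x : E) :
    weightedMean p (fun _ => x) = x := by
  rw [weightedMean, ← Finset.sum_smul, hp, one_smul]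

theorem map_weightedMean (φ : E →ₗ[ℝ] F) (p : α → ℝ) (X : α → E) :
    φ (weightedMean p X) = weightedMean p (fun a => φ (X a)) := by
  simp [weightedMean]

theorem weightedMean_mono {p : α → ℝ} (hp : ∀ a, 0 ≤ p a) {X Y : α → ℝ} (hXY : ∀ a, X a ≤ Y a) :
    weightedMean p X ≤ weightedMean p Y :=
  Finset.sum_le_sum fun a _ => mul_le_mul_of_nonneg_left (hXY a) (hp a)

theorem weightedMean_sqrt_le {p : α → ℝ} (hp : p ∈ stdSimplex ℝ α) {X : α → ℝ}
    (hX : ∀ a, 0 ≤ X a) :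
    weightedMean p (fun a => √(X a)) ≤ √(weightedMean p X) :=
  Real.strictConcaveOn_sqrt.concaveOn.le_map_sum (fun a _ => hp.1 a) hp.2 fun a _ => hX a

/-- The probability of the event `s` under the weights `p`. -/
noncomputable def weightedMass (p : α → ℝ) (s : Set α) : ℝ :=
  ∑ a, s.indicator p a

theorem weightedMass_eq_sum_filter (p : α → ℝ) (P : α → Prop) [DecidablePred P] :
    weightedMass p {a | P a} = ∑ a with P a, p a := by
  simp [weightedMass, Set.indicator_apply, Finset.sum_filter]

theorem weightedMass_nonneg {p : α → ℝ} (hp : ∀ a, 0 ≤ p a) (s : Set α) : 0 ≤ weightedMass p s :=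
  Finset.sum_nonneg fun a _ => Set.indicator_nonneg (fun b _ => hp b) a

theorem weightedMass_mono {p : α → ℝ} (hp : ∀ a, 0 ≤ p a) {s t : Set α}
    (hst : ∀ a ∈ s, p a ≠ 0 → a ∈ t) : weightedMass p s ≤ weightedMass p t := by
  refine Finset.sum_le_sum fun a _ => Set.indicator_apply_le' (fun ha => ?_) fun _ =>
    Set.indicator_nonneg (fun b _ => hp b) a
  by_cases h : p a = 0
  · exact h.trans_le (Set.indicator_nonneg (fun b _ => hp b) a)
  · rw [Set.indicator_of_mem (hst a ha h)]

theorem weightedMass_add_compl (p : α → ℝ) (s : Set α) :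
    weightedMass p s + weightedMass p sᶜ = ∑ a, p a := by
  rw [weightedMass, weightedMass, ← Finset.sum_add_distrib]
  exact Finset.sum_congr rfl fun a _ => congrFun (Set.indicator_self_add_compl s p) a

theorem mul_weightedMass_lt_le_weightedMean {p : α → ℝ} (hp : ∀ a, 0 ≤ p a) {X : α → ℝ}
    (hX : ∀ a, 0 ≤ X a) (c : ℝ) : c * weightedMass p {a | c < X a} ≤ weightedMean p X := by
  rw [weightedMass, Finset.mul_sum]
  refine Finset.sum_le_sum fun a _ => ?_
  by_cases ha : c < X a
  · rw [Set.indicator_of_mem (show a ∈ {a | c < X a} from ha), mul_comm]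
    exact mul_le_mul_of_nonneg_left ha.le (hp a)
  · rw [Set.indicator_of_notMem (by simpa using ha), mul_zero]
    exact mul_nonneg (hp a) (hX a)

theorem one_sub_le_weightedMass_of_weightedMean_le {p : α → ℝ} (hp : p ∈ stdSimplex ℝ α)
    {X : α → ℝ} (hX : ∀ a, 0 ≤ X a) {ε κ : ℝ} (hε : 0 < ε) (h : weightedMean p X ≤ ε * κ) :
    1 - κ ≤ weightedMass p {a | X a ≤ ε} := by
  have hcompl : {a | X a ≤ ε}ᶜ = {a | ε < X a} := by ext; simp
  have htail : weightedMass p {a | ε < X a} ≤ κ :=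
    le_of_mul_le_mul_left ((mul_weightedMass_lt_le_weightedMean hp.1 hX ε).trans h) hε
  have htotal := weightedMass_add_compl p {a | X a ≤ ε}
  rw [hcompl, hp.2] at htotal
  linarith

theorem weightedMean_bilin_sub_weightedMean {p : α → ℝ} (hp : ∑ a, p a = 1)
    (B : LinearMap.BilinForm ℝ E) (X : α → E) :
    weightedMean p (fun a => B (X a - weightedMean p X) (X a - weightedMean p X)) =
      weightedMean p (fun a => B (X a) (X a)) - B (weightedMean p X) (weightedMean p X) := by
  have hleft : weightedMean p (fun a => B (X a) (weightedMean p X)) =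
      B (weightedMean p X) (weightedMean p X) := (map_weightedMean (B.flip _) p X).symm
  have hright : weightedMean p (fun a => B (weightedMean p X) (X a)) =
      B (weightedMean p X) (weightedMean p X) := (map_weightedMean (B _) p X).symm
  simp only [map_sub, LinearMap.sub_apply, weightedMean_sub, hleft, hright, weightedMean_const hp]
  ring

end WeightedMean

section Independence

variable {τ : Type*} [Fintype τ] {κ : τ → Type*}

/-- The product of the distributions `w t`: the law of independent coordinates `K t`. In particular
`piWeight fun _ : Fin N => p` is the law of `N` independent samples of `p`. -/
def piWeight (w : ∀ t, κ t → ℝ) (K : ∀ t, κ t) : ℝ :=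
  ∏ t, w t (K t)

theorem piWeight_mem_stdSimplex [DecidableEq τ] [∀ t, Fintype (κ t)] {w : ∀ t, κ t → ℝ}
    (hw : ∀ t, w t ∈ stdSimplex ℝ (κ t)) : piWeight w ∈ stdSimplex ℝ (∀ t, κ t) := by
  refine ⟨fun K => Finset.prod_nonneg fun t _ => (hw t).1 _, ?_⟩
  simp only [piWeight, ← Fintype.prod_sum, (hw _).2, Finset.prod_const_one]

/-- The law of a pair `(a, i)` in which `a` has law `q` and `i` has law `w a` given `a`. -/
def jointWeight {α β : Type*} (q : α → ℝ) (w : α → β → ℝ) (x : α × β) : ℝ :=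
  q x.1 * w x.1 x.2

variable {α β E : Type*} [Fintype α] [Fintype β] [AddCommGroup E] [Module ℝ E]

theorem weightedMean_jointWeight (q : α → ℝ) (w : α → β → ℝ) (X : α × β → E) :
    weightedMean (jointWeight q w) X =
      weightedMean q (fun a => weightedMean (w a) (fun i => X (a, i))) := by
  simp only [weightedMean, jointWeight, Fintype.sum_prod_type, mul_smul, Finset.smul_sum]

theorem jointWeight_mem_stdSimplex {q : α → ℝ} (hq : q ∈ stdSimplex ℝ α) {w : α → β → ℝ}
    (hw : ∀ a, w a ∈ stdSimplex ℝ β) : jointWeight q w ∈ stdSimplex ℝ (α × β) := by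
  refine ⟨fun x => mul_nonneg (hq.1 _) ((hw _).1 _), ?_⟩
  simp only [jointWeight, Fintype.sum_prod_type, ← Finset.mul_sum, (hw _).2, mul_one, hq.2]

theorem weightedMean_weightedMass_piWeight [DecidableEq τ] (q : α → ℝ) (w : α → β → ℝ)
    (s : (τ → α) → Set (τ → β)) :
    weightedMean (piWeight fun _ : τ => q)
        (fun J => weightedMass (piWeight fun t => w (J t)) (s J)) =
      weightedMass (piWeight fun _ : τ => jointWeight q w)
        {x | (fun t => (x t).2) ∈ s fun t => (x t).1} := by
  rw [weightedMass, ← (Equiv.arrowProdEquivProdArrow τ (fun _ => α) fun _ => β).symm.sum_comp,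
    Fintype.sum_prod_type]
  simp only [weightedMean, weightedMass, Finset.mul_sum, smul_eq_mul]
  refine Finset.sum_congr rfl fun J _ => Finset.sum_congr rfl fun K _ => ?_
  by_cases h : K ∈ s J
  · rw [Set.indicator_of_mem h, Set.indicator_of_mem (by exact h)]
    exact Finset.prod_mul_distrib.symm
  · rw [Set.indicator_of_notMem h, Set.indicator_of_notMem (by exact h), mul_zero]

theorem weightedMean_piWeight_succ (p : α → ℝ) {N : ℕ} (X : (Fin (N + 1) → α) → E) :
    weightedMean (piWeight fun _ => p) X =
      weightedMean p (fun a => weightedMean (piWeight fun _ => p) (fun f => X (Fin.cons a f))) := by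
  rw [weightedMean, ← (Fin.consEquiv fun _ => α).sum_comp, Fintype.sum_prod_type]
  simp only [weightedMean, piWeight, Fin.prod_univ_succ, mul_smul, Finset.smul_sum]
  rfl

theorem weightedMean_piWeight_sum {p : α → ℝ} (hp : p ∈ stdSimplex ℝ α) (N : ℕ) (X : α → E) :
    weightedMean (piWeight fun _ : Fin N => p) (fun f => ∑ k, X (f k)) =
      (N : ℝ) • weightedMean p X := by
  induction N with
  | zero => simp [weightedMean]
  | succ N ih =>
    have hpN := (piWeight_mem_stdSimplex fun _ : Fin N => hp).2
    simp only [weightedMean_piWeight_succ, Fin.sum_univ_succ, Fin.cons_zero, Fin.cons_succ,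
      weightedMean_add, weightedMean_const hpN, weightedMean_const hp.2, ih]
    push_cast
    module

theorem weightedMean_piWeight_bilin_sum {p : α → ℝ} (hp : p ∈ stdSimplex ℝ α) (N : ℕ)
    (B : LinearMap.BilinForm ℝ E) {X : α → E} (hX : weightedMean p X = 0) :
    weightedMean (piWeight fun _ : Fin N => p) (fun f => B (∑ k, X (f k)) (∑ k, X (f k))) =
      N * weightedMean p (fun a => B (X a) (X a)) := by
  induction N with
  | zero => simp [weightedMean]
  | succ N ih =>
    have hpN := (piWeight_mem_stdSimplex fun _ : Fin N => hp).2
    have hsum := weightedMean_piWeight_sum hp N X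
    rw [hX, smul_zero] at hsum
    -- Both cross terms vanish since the sum of the last `N` samples is centered.
    have hleft (a : α) : weightedMean (piWeight fun _ : Fin N => p)
        (fun f => B (∑ k, X (f k)) (X a)) = 0 := by
      exact (map_weightedMean (B.flip (X a)) _ _).symm.trans (by rw [hsum, map_zero])
    have hright (a : α) : weightedMean (piWeight fun _ : Fin N => p)
        (fun f => B (X a) (∑ k, X (f k))) = 0 := by
      rw [← map_weightedMean (B (X a)), hsum, map_zero]
    simp only [weightedMean_piWeight_succ, Fin.sum_univ_succ, Fin.cons_zero, Fin.cons_succ,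
      map_add, LinearMap.add_apply, weightedMean_add, weightedMean_const hpN,
      weightedMean_const hp.2, hleft, hright, ih]
    rw [add_zero, zero_add]
    push_cast
    ring

end Independence

section SampleMean

variable {α E F : Type*} [AddCommGroup E] [Module ℝ E] [AddCommGroup F] [Module ℝ F] {N : ℕ}

/-- The empirical mean of `X` over the sample `f`; it is `0` for the empty sample. -/
noncomputable def sampleMean (X : α → E) (f : Fin N → α) : E :=
  (N : ℝ)⁻¹ • ∑ k, X (f k)

theorem map_sampleMean (φ : E →ₗ[ℝ] F) (X : α → E) (f : Fin N → α) :
    φ (sampleMean X f) = sampleMean (fun a => φ (X a)) f := by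
  simp [sampleMean]

theorem sampleMean_sub (X Y : α → E) (f : Fin N → α) :
    sampleMean (fun a => X a - Y a) f = sampleMean X f - sampleMean Y f := by
  simp [sampleMean, smul_sub]

theorem sampleMean_const [NeZero N] (x : E) (f : Fin N → α) : sampleMean (fun _ => x) f = x := by
  simp [sampleMean, ← Nat.cast_smul_eq_nsmul ℝ, inv_smul_smul₀ (NeZero.ne (N : ℝ))]

variable [Fintype α] {p : α → ℝ} [NeZero N]

theorem weightedMean_sampleMean (hp : p ∈ stdSimplex ℝ α) (X : α → E) :
    weightedMean (piWeight fun _ : Fin N => p) (sampleMean X) = weightedMean p X := by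
  rw [← inv_smul_smul₀ (NeZero.ne (N : ℝ)) (weightedMean p X), ← weightedMean_piWeight_sum hp]
  exact (map_weightedMean (LinearMap.lsmul ℝ E (N : ℝ)⁻¹) _ _).symm

theorem weightedMean_bilin_sampleMean_sub (hp : p ∈ stdSimplex ℝ α)
    (B : LinearMap.BilinForm ℝ E) (X : α → E) :
    weightedMean (piWeight fun _ : Fin N => p)
        (fun f => B (sampleMean X f - weightedMean p X) (sampleMean X f - weightedMean p X)) =
      (N : ℝ)⁻¹ *
        weightedMean p (fun a => B (X a - weightedMean p X) (X a - weightedMean p X)) := by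
  have hcenter : weightedMean p (fun a => X a - weightedMean p X) = 0 := by
    rw [weightedMean_sub, weightedMean_const hp.2, sub_self]
  have hB (f : Fin N → α) :
      B (sampleMean X f - weightedMean p X) (sampleMean X f - weightedMean p X) =
        (N : ℝ)⁻¹ ^ 2 *
          B (∑ k, (X (f k) - weightedMean p X)) (∑ k, (X (f k) - weightedMean p X)) := by
    rw [← sampleMean_const (weightedMean p X) f, ← sampleMean_sub, sampleMean_const, sampleMean]
    simp only [map_smul, LinearMap.smul_apply, smul_eq_mul]
    ring
  simp only [hB, weightedMean_const_mul, weightedMean_piWeight_bilin_sum hp N B hcenter]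
  field_simp

theorem weightedMean_bilin_sampleMean_sub_le (hp : p ∈ stdSimplex ℝ α)
    {B : LinearMap.BilinForm ℝ E} (hB : ∀ x, 0 ≤ B x x) {X : α → E} {c : ℝ}
    (hX : ∀ a, B (X a) (X a) ≤ c) :
    weightedMean (piWeight fun _ : Fin N => p)
        (fun f => B (sampleMean X f - weightedMean p X) (sampleMean X f - weightedMean p X)) ≤
      c / N := by
  rw [weightedMean_bilin_sampleMean_sub hp, weightedMean_bilin_sub_weightedMean hp.2,
    ← div_eq_inv_mul]
  gcongr
  calc weightedMean p (fun a => B (X a) (X a)) - B (weightedMean p X) (weightedMean p X)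
      ≤ weightedMean p (fun a => B (X a) (X a)) := sub_le_self _ (hB _)
    _ ≤ weightedMean p (fun _ => c) := weightedMean_mono hp.1 hX
    _ = c := weightedMean_const hp.2 c

theorem weightedMass_lt_abs_sampleMean_sub_le (hp : p ∈ stdSimplex ℝ α) (g : α → ℝ)
    {η : ℝ} (hη : 0 < η) :
    weightedMass (piWeight fun _ : Fin N => p) {f | η < |sampleMean g f - weightedMean p g|} ≤
      weightedMean p (fun a => (g a - weightedMean p g) * (g a - weightedMean p g))
        / η ^ 2 / N := by
  have hevent : {f : Fin N → α | η < |sampleMean g f - weightedMean p g|} = {f | η ^ 2 <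
      (sampleMean g f - weightedMean p g) * (sampleMean g f - weightedMean p g)} := by
    ext f
    simp only [Set.mem_ofPred_eq, ← sq, sq_lt_sq, abs_of_pos hη]
  rw [hevent, div_right_comm, le_div_iff₀' (by positivity), div_eq_inv_mul]
  exact (mul_weightedMass_lt_le_weightedMean (piWeight_mem_stdSimplex fun _ => hp).1
    (fun _ => mul_self_nonneg _) _).trans_eq
      (weightedMean_bilin_sampleMean_sub hp (LinearMap.mul ℝ ℝ) g)

end SampleMean

section TypicalSet

open Filter Topology

variable {α : Type*}

theorem piWeight_eq_two_rpow_sampleMean_logb {n : ℕ} [NeZero n] {r : α → ℝ} {a : Fin n → α}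
    (hr : ∀ t, 0 < r (a t)) :
    piWeight (fun _ => r) a = (2 : ℝ) ^ (n * sampleMean (fun x => Real.logb 2 (r x)) a) := by
  rw [sampleMean, smul_eq_mul, mul_inv_cancel_left₀ (NeZero.ne (n : ℝ)),
    ← Real.logb_prod _ _ fun t _ => (hr t).ne',
    Real.rpow_logb two_pos one_lt_two.ne' (Finset.prod_pos fun t _ => hr t), piWeight]

variable [Fintype α]

/-- The `η`-typical sequences of length `n`: those on which the product of the values of `r` is
`2 ^ (n * E)` up to an error `η` in the rate, `E` being the mean of `log₂ r` under `p`. With `r = p`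
these are the usual weakly typical sequences. -/
noncomputable def typicalSet (p r : α → ℝ) (η : ℝ) (n : ℕ) : Set (Fin n → α) :=
  {a | piWeight (fun _ => r) a ∈
    Set.Icc ((2 : ℝ) ^ (n * (weightedMean p (fun x => Real.logb 2 (r x)) - η)))
      ((2 : ℝ) ^ (n * (weightedMean p (fun x => Real.logb 2 (r x)) + η)))}

theorem mem_typicalSet_of_abs_sampleMean_sub_le {p r : α → ℝ} {η : ℝ} {n : ℕ} [NeZero n]
    {a : Fin n → α} (hr : ∀ t, 0 < r (a t))
    (ha : |sampleMean (fun x => Real.logb 2 (r x)) a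
      - weightedMean p (fun x => Real.logb 2 (r x))| ≤ η) : a ∈ typicalSet p r η n := by
  obtain ⟨hlower, hupper⟩ := abs_le.1 ha
  rw [typicalSet, Set.mem_ofPred_eq, piWeight_eq_two_rpow_sampleMean_logb hr]
  constructor <;> gcongr <;> first | exact one_le_two | linarith

theorem weightedMass_compl_typicalSet_le {p r : α → ℝ} (hp : p ∈ stdSimplex ℝ α)
    (hr : ∀ x, p x ≠ 0 → 0 < r x) {η : ℝ} (hη : 0 < η) (n : ℕ) [NeZero n] :
    weightedMass (piWeight fun _ => p) (typicalSet p r η n)ᶜ ≤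
      weightedMean p (fun x =>
        (Real.logb 2 (r x) - weightedMean p (fun x => Real.logb 2 (r x))) *
          (Real.logb 2 (r x) - weightedMean p (fun x => Real.logb 2 (r x)))) / η ^ 2 / n := by
  refine (weightedMass_mono (piWeight_mem_stdSimplex fun _ => hp).1 fun a ha hpa => ?_).trans
    (weightedMass_lt_abs_sampleMean_sub_le hp (fun x => Real.logb 2 (r x)) hη)
  by_contra hdev
  exact ha (mem_typicalSet_of_abs_sampleMean_sub_le
    (fun t => hr _ (Finset.prod_ne_zero_iff.1 hpa t (Finset.mem_univ t))) (not_lt.1 hdev))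

theorem tendsto_weightedMass_compl_typicalSet {p r : α → ℝ} (hp : p ∈ stdSimplex ℝ α)
    (hr : ∀ x, p x ≠ 0 → 0 < r x) {η : ℝ} (hη : 0 < η) :
    Tendsto (fun n => weightedMass (piWeight fun _ => p) (typicalSet p r η n)ᶜ) atTop (𝓝 0) := by
  have hpow (n : ℕ) := (piWeight_mem_stdSimplex fun _ : Fin n => hp).1
  exact squeeze_zero' (Eventually.of_forall fun n => weightedMass_nonneg (hpow n) _)
    ((eventually_gt_atTop 0).mono fun n hn =>
      have : NeZero n := ⟨hn.ne'⟩
      weightedMass_compl_typicalSet_le hp hr hη n)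
    (tendsto_const_div_atTop_nhds_zero_nat _)

end TypicalSet

section HilbertSchmidt

variable {ι : Type*} [Fintype ι]

/-- The real part of the trace, as a real linear form. -/
noncomputable def reTrace : Matrix ι ι ℂ →ₗ[ℝ] ℝ :=
  Complex.reLm ∘ₗ Matrix.traceLinearMap ι ℝ ℂ

theorem reTrace_mul_comm (X Y : Matrix ι ι ℂ) : reTrace (X * Y) = reTrace (Y * X) :=
  congrArg Complex.re (Matrix.trace_mul_comm X Y)

theorem reTrace_star (X : Matrix ι ι ℂ) : reTrace (star X) = reTrace X :=
  (congrArg Complex.re (Matrix.trace_conjTranspose X)).trans (Complex.conj_re _)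

theorem reTrace_nonneg_of_posSemidef {A : Matrix ι ι ℂ} (hA : A.PosSemidef) : 0 ≤ reTrace A :=
  (Complex.nonneg_iff.1 hA.trace_nonneg).1

/-- The real Hilbert–Schmidt inner product `Re tr (X* Y)`. -/
noncomputable def hilbertSchmidtForm : LinearMap.BilinForm ℝ (Matrix ι ι ℂ) :=
  LinearMap.mk₂ ℝ (fun X Y => reTrace (star X * Y)) (by simp [add_mul]) (by simp)
    (by simp [mul_add]) (by simp)

theorem hilbertSchmidtForm_apply (X Y : Matrix ι ι ℂ) :
    hilbertSchmidtForm X Y = reTrace (star X * Y) :=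
  rfl

theorem hilbertSchmidtForm_self_nonneg (X : Matrix ι ι ℂ) : 0 ≤ hilbertSchmidtForm X X :=
  reTrace_nonneg_of_posSemidef (Matrix.posSemidef_conjTranspose_mul_self X)

theorem hilbertSchmidtForm_isSymm : LinearMap.IsSymm (hilbertSchmidtForm (ι := ι)) :=
  ⟨fun X Y => (reTrace_star (star X * Y)).symm.trans <| by
    rw [star_mul, star_star, hilbertSchmidtForm_apply]⟩

theorem hilbertSchmidtForm_star_self (X : Matrix ι ι ℂ) :
    hilbertSchmidtForm (star X) (star X) = hilbertSchmidtForm X X := by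
  rw [hilbertSchmidtForm_apply, hilbertSchmidtForm_apply, star_star, reTrace_mul_comm]

theorem abs_reTrace_mul_le (X Y : Matrix ι ι ℂ) :
    |reTrace (X * Y)| ≤ √(hilbertSchmidtForm X X) * √(hilbertSchmidtForm Y Y) := by
  rw [← Real.sqrt_mul (hilbertSchmidtForm_self_nonneg X), ← hilbertSchmidtForm_star_self X,
    ← star_star X, ← hilbertSchmidtForm_apply, star_star]
  exact Real.abs_le_sqrt <| LinearMap.BilinForm.apply_sq_le_of_symm _
    hilbertSchmidtForm_self_nonneg hilbertSchmidtForm_isSymm _ _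

end HilbertSchmidt

section GentleMeasurement

variable {ι : Type*} [Fintype ι] {U P A : Matrix ι ι ℂ}

theorem hilbertSchmidtForm_unitary_mul_projection_mul [DecidableEq ι]
    (hU : U ∈ Matrix.unitaryGroup ι ℂ) (hP : IsStarProjection P) (X : Matrix ι ι ℂ) :
    hilbertSchmidtForm (U * P * X) (U * P * X) = reTrace (P * (X * star X)) := by
  calc hilbertSchmidtForm (U * P * X) (U * P * X)
      = reTrace (star X * (star P * (star U * U) * P) * X) := by
        simp only [hilbertSchmidtForm_apply, star_mul, mul_assoc]
    _ = reTrace (star X * P * X) := by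
        rw [Unitary.star_mul_self_of_mem hU, mul_one, hP.isSelfAdjoint.star_eq,
          hP.isIdempotentElem.eq]
    _ = reTrace (P * (X * star X)) := by rw [mul_assoc, reTrace_mul_comm, mul_assoc]

open scoped MatrixOrder Matrix.Norms.L2Operator in
theorem posSemidef_iff_exists_eq_mul_star : A.PosSemidef ↔ ∃ B, A = B * star B := by
  classical
  exact Matrix.nonneg_iff_posSemidef.symm.trans CStarAlgebra.nonneg_iff_eq_mul_star_self

theorem reTrace_projection_mul_nonneg (hP : IsStarProjection P) (hA : A.PosSemidef) :
    0 ≤ reTrace (P * A) := by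
  classical
  obtain ⟨B, rfl⟩ := posSemidef_iff_exists_eq_mul_star.1 hA
  exact hilbertSchmidtForm_unitary_mul_projection_mul (one_mem _) hP B ▸
    hilbertSchmidtForm_self_nonneg _

theorem reTrace_projection_mul_le (hP : IsStarProjection P) (hA : A.PosSemidef) :
    reTrace (P * A) ≤ reTrace A := by
  classical
  simpa [sub_mul] using reTrace_projection_mul_nonneg hP.one_sub hA

variable [DecidableEq ι]

theorem abs_reTrace_unitary_mul_projection_mul_le_sqrt
    (hU : U ∈ Matrix.unitaryGroup ι ℂ) (hP : IsStarProjection P) (hA : A.PosSemidef) :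
    |reTrace (U * P * A)| ≤ √(reTrace (P * A)) * √(reTrace A) := by
  obtain ⟨B, rfl⟩ := posSemidef_iff_exists_eq_mul_star.1 hA
  rw [← hilbertSchmidtForm_unitary_mul_projection_mul hU hP, reTrace_mul_comm B, ← mul_assoc]
  simpa only [← hilbertSchmidtForm_apply, hilbertSchmidtForm_star_self]
    using abs_reTrace_mul_le (U * P * B) (star B)

theorem abs_reTrace_unitary_mul_projection_mul_le
    (hU : U ∈ Matrix.unitaryGroup ι ℂ) (hP : IsStarProjection P) (hA : A.PosSemidef) :
    |reTrace (U * P * A)| ≤ reTrace A :=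
  calc |reTrace (U * P * A)|
      ≤ √(reTrace (P * A)) * √(reTrace A) :=
        abs_reTrace_unitary_mul_projection_mul_le_sqrt hU hP hA
    _ ≤ √(reTrace A) * √(reTrace A) := by
        gcongr
        exact reTrace_projection_mul_le hP hA
    _ = reTrace A := Real.mul_self_sqrt (reTrace_nonneg_of_posSemidef hA)

theorem abs_reTrace_unitary_mul_projection_mul_le_sqrt_mul_sqrt
    (hU : U ∈ Matrix.unitaryGroup ι ℂ) (hP : IsStarProjection P) (X : Matrix ι ι ℂ) :
    |reTrace (U * P * X)| ≤ √(reTrace P) * √(hilbertSchmidtForm X X) := by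
  have hUP := hilbertSchmidtForm_unitary_mul_projection_mul hU hP 1
  rw [mul_one, star_one, mul_one, mul_one] at hUP
  exact hUP ▸ abs_reTrace_mul_le (U * P) X

end GentleMeasurement

section Spectrum

variable {ι : Type*} [Fintype ι] [DecidableEq ι]

/-- The matrix with real spectrum `w` in the orthonormal eigenbasis formed by the columns of `V`.
It is bundled as an algebra homomorphism because functional calculus in a fixed eigenbasis is
pointwise. -/
noncomputable def ofSpectrum (V : Matrix.unitaryGroup ι ℂ) : (ι → ℝ) →ₐ[ℝ] Matrix ι ι ℂ :=
  ((Unitary.conjStarAlgAut ℝ (Matrix ι ι ℂ) V).toAlgEquiv.toAlgHom.comp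
    (Matrix.diagonalAlgHom ℝ)).comp (Complex.ofRealAm.compLeft ι)

variable (V : Matrix.unitaryGroup ι ℂ) (w : ι → ℝ)

theorem ofSpectrum_apply :
    ofSpectrum V w = V * Matrix.diagonal (fun i => (w i : ℂ)) * star (V : Matrix ι ι ℂ) :=
  rfl

theorem star_ofSpectrum : star (ofSpectrum V w) = ofSpectrum V w := by
  simp [ofSpectrum_apply, mul_assoc, Matrix.star_eq_conjTranspose,
    Matrix.diagonal_conjTranspose, Pi.star_def]

theorem reTrace_ofSpectrum : reTrace (ofSpectrum V w) = ∑ i, w i := by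
  rw [ofSpectrum_apply, reTrace_mul_comm, ← mul_assoc, Unitary.coe_star_mul_self, one_mul]
  simp [reTrace, Matrix.trace_diagonal]

theorem hilbertSchmidtForm_ofSpectrum (w' : ι → ℝ) :
    hilbertSchmidtForm (ofSpectrum V w) (ofSpectrum V w') = ∑ i, w i * w' i := by
  rw [hilbertSchmidtForm_apply, star_ofSpectrum, ← map_mul, reTrace_ofSpectrum]
  rfl

theorem isStarProjection_ofSpectrum_indicator (s : Set ι) :
    IsStarProjection (ofSpectrum V (s.indicator 1)) where
  isIdempotentElem := by rw [IsIdempotentElem, ← map_mul, ← Set.inter_indicator_one, Set.inter_self]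
  isSelfAdjoint := star_ofSpectrum V _

theorem ofSpectrum_mem_unitaryGroup (hw : ∀ i, w i * w i = 1) :
    ofSpectrum V w ∈ Matrix.unitaryGroup ι ℂ := by
  rw [Matrix.mem_unitaryGroup_iff, star_ofSpectrum, ← map_mul, show w * w = 1 from funext hw,
    map_one]

variable {V w} in
theorem posSemidef_ofSpectrum (hw : ∀ i, 0 ≤ w i) : (ofSpectrum V w).PosSemidef :=
  (Matrix.PosSemidef.diagonal fun i => Complex.zero_le_real.2 (hw i)).mul_mul_conjTranspose_same _

theorem ofSpectrum_eigenvalues {A : Matrix ι ι ℂ} (hA : A.IsHermitian) :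
    ofSpectrum hA.eigenvectorUnitary hA.eigenvalues = A :=
  hA.spectral_theorem.symm

theorem IsDensityMatrix.exists_ofSpectrum {A : Matrix ι ι ℂ} (hA : IsDensityMatrix A) :
    ∃ V, ∃ w ∈ stdSimplex ℝ ι, ofSpectrum V w = A ∧
      vnEntropy A = -weightedMean w (fun i => Real.logb 2 (w i)) := by
  have hherm := hA.1.isHermitian
  refine ⟨hherm.eigenvectorUnitary, hherm.eigenvalues, ⟨hA.1.eigenvalues_nonneg, ?_⟩,
    ofSpectrum_eigenvalues hherm, dif_pos hherm⟩
  rw [← reTrace_ofSpectrum hherm.eigenvectorUnitary, ofSpectrum_eigenvalues]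
  exact congrArg Complex.re hA.2

theorem traceNorm_nonneg (M : Matrix ι ι ℂ) : 0 ≤ traceNorm M := by
  rw [traceNorm]
  split_ifs
  exacts [Finset.sum_nonneg fun i _ => abs_nonneg _, le_rfl]

theorem exists_mem_unitaryGroup_traceNorm_eq {M : Matrix ι ι ℂ} (hM : M.IsHermitian) :
    ∃ U ∈ Matrix.unitaryGroup ι ℂ, traceNorm M = reTrace (U * M) := by
  have hsign (i : ι) : ∃ s : ℝ, s * s = 1 ∧ s * hM.eigenvalues i = |hM.eigenvalues i| := by
    obtain h | h := le_total 0 (hM.eigenvalues i)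
    · exact ⟨1, by norm_num, by rw [one_mul, abs_of_nonneg h]⟩
    · exact ⟨-1, by norm_num, by rw [neg_one_mul, abs_of_nonpos h]⟩
  choose s hs habs using hsign
  refine ⟨ofSpectrum hM.eigenvectorUnitary s, ofSpectrum_mem_unitaryGroup _ s hs, ?_⟩
  rw [traceNorm, dif_pos hM]
  nth_rw 3 [← ofSpectrum_eigenvalues hM]
  rw [← map_mul, reTrace_ofSpectrum]
  exact Finset.sum_congr rfl fun i _ => (habs i).symm

end Spectrum

section TraceNormBound

variable {ι : Type*} [Fintype ι] [DecidableEq ι]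

/-- `A` and `B` are compared on the range of `P` by Cauchy–Schwarz, after discarding `T` and `T'`,
and off the range of `P` by the gentle measurement inequality. -/
theorem traceNorm_sub_le_of_projection {P A B T T' : Matrix ι ι ℂ} (hP : IsStarProjection P)
    (hA : A.PosSemidef) (hB : B.PosSemidef) (hT : T.PosSemidef) (hT' : T'.PosSemidef) :
    traceNorm (A - B) ≤
      √(reTrace P) * √(hilbertSchmidtForm (A - T - (B - T')) (A - T - (B - T')))
        + reTrace T + reTrace T'
        + √(reTrace ((1 - P) * A)) * √(reTrace A) + √(reTrace ((1 - P) * B)) * √(reTrace B) := by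
  obtain ⟨U, hU, hUAB⟩ :=
    exists_mem_unitaryGroup_traceNorm_eq (hA.isHermitian.sub hB.isHermitian)
  have hsplit : U * (A - B) = U * P * (A - T - (B - T')) + U * P * T - U * P * T'
      + U * (1 - P) * A - U * (1 - P) * B := by
    noncomm_ring
  rw [hUAB, hsplit, map_sub, map_add, map_sub, map_add]
  have hbulk := abs_reTrace_unitary_mul_projection_mul_le_sqrt_mul_sqrt hU hP (A - T - (B - T'))
  have hcutA := abs_reTrace_unitary_mul_projection_mul_le hU hP hT
  have hcutB := abs_reTrace_unitary_mul_projection_mul_le hU hP hT'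
  have htailA := abs_reTrace_unitary_mul_projection_mul_le_sqrt hU hP.one_sub hA
  have htailB := abs_reTrace_unitary_mul_projection_mul_le_sqrt hU hP.one_sub hB
  rw [abs_le] at *
  linarith

end TraceNormBound

section Expectation

variable {ι α : Type*} {R T : α → Matrix ι ι ℂ}

theorem posSemidef_weightedMean [Fintype α] {p : α → ℝ} (hp : ∀ a, 0 ≤ p a)
    (hR : ∀ a, (R a).PosSemidef) : (weightedMean p R).PosSemidef :=
  Matrix.posSemidef_sum _ fun a _ => (hR a).smul (hp a)

theorem posSemidef_sampleMean (hR : ∀ a, (R a).PosSemidef) {N : ℕ} (f : Fin N → α) :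
    (sampleMean R f).PosSemidef :=
  (Matrix.posSemidef_sum _ fun k _ => hR (f k)).smul (by positivity)

variable [Fintype α] [Fintype ι] [DecidableEq ι] {p : α → ℝ} {P : Matrix ι ι ℂ}

theorem traceNorm_sampleMean_sub_le (hp : p ∈ stdSimplex ℝ α) (hP : IsStarProjection P)
    (hR : ∀ a, (R a).PosSemidef) (hT : ∀ a, (T a).PosSemidef) (htr : ∀ a, reTrace (R a) = 1)
    {N : ℕ} [NeZero N] (f : Fin N → α) :
    traceNorm (sampleMean R f - weightedMean p R) ≤
      √(reTrace P) * √(hilbertSchmidtForm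
          (sampleMean (fun a => R a - T a) f - weightedMean p (fun a => R a - T a))
          (sampleMean (fun a => R a - T a) f - weightedMean p (fun a => R a - T a)))
        + sampleMean (fun a => reTrace (T a)) f + reTrace (weightedMean p T)
        + √(sampleMean (fun a => reTrace ((1 - P) * R a)) f)
        + √(reTrace ((1 - P) * weightedMean p R)) := by
  have h := traceNorm_sub_le_of_projection hP (posSemidef_sampleMean hR f)
    (posSemidef_weightedMean hp.1 hR) (posSemidef_sampleMean hT f) (posSemidef_weightedMean hp.1 hT)
  have hcompl : reTrace ((1 - P) * sampleMean R f) =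
      sampleMean (fun a => reTrace ((1 - P) * R a)) f :=
    map_sampleMean (reTrace ∘ₗ LinearMap.mulLeft ℝ (1 - P)) R f
  rwa [← sampleMean_sub, ← weightedMean_sub, hcompl, map_sampleMean, map_sampleMean,
    map_weightedMean _ _ R, funext htr, sampleMean_const, weightedMean_const hp.2, Real.sqrt_one,
    mul_one, mul_one] at h

theorem weightedMean_traceNorm_sampleMean_sub_le (hp : p ∈ stdSimplex ℝ α)
    (hP : IsStarProjection P) (hR : ∀ a, (R a).PosSemidef) (hT : ∀ a, (T a).PosSemidef)
    (htr : ∀ a, reTrace (R a) = 1) {c : ℝ}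
    (hc : ∀ a, hilbertSchmidtForm (R a - T a) (R a - T a) ≤ c) (N : ℕ) [NeZero N] :
    weightedMean (piWeight fun _ : Fin N => p)
        (fun f => traceNorm (sampleMean R f - weightedMean p R)) ≤
      √(reTrace P) * √(c / N) + 2 * reTrace (weightedMean p T)
        + 2 * √(reTrace ((1 - P) * weightedMean p R)) := by
  have hpN := piWeight_mem_stdSimplex fun _ : Fin N => hp
  have hbulk := (weightedMean_sqrt_le hpN fun f => hilbertSchmidtForm_self_nonneg
    (sampleMean (fun a => R a - T a) f - weightedMean p (fun a => R a - T a))).trans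
      (Real.sqrt_le_sqrt
        (weightedMean_bilin_sampleMean_sub_le hp hilbertSchmidtForm_self_nonneg hc))
  have hcut : weightedMean (piWeight fun _ : Fin N => p) (sampleMean fun a => reTrace (T a)) =
      reTrace (weightedMean p T) :=
    (weightedMean_sampleMean hp _).trans (map_weightedMean reTrace p T).symm
  have htail : weightedMean (piWeight fun _ : Fin N => p)
      (fun f => √(sampleMean (fun a => reTrace ((1 - P) * R a)) f)) ≤
        √(reTrace ((1 - P) * weightedMean p R)) := by
    refine (weightedMean_sqrt_le hpN fun f => ?_).trans_eq (congrArg _ ?_)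
    · exact mul_nonneg (by positivity)
        (Finset.sum_nonneg fun k _ => reTrace_projection_mul_nonneg hP.one_sub (hR (f k)))
    · exact (weightedMean_sampleMean hp _).trans
        (map_weightedMean (reTrace ∘ₗ LinearMap.mulLeft ℝ (1 - P)) p R).symm
  refine (weightedMean_mono hpN.1 (traceNorm_sampleMean_sub_le hp hP hR hT htr)).trans ?_
  simp only [weightedMean_add, weightedMean_const_mul, weightedMean_const hpN.2, hcut]
  have hbulk' := mul_le_mul_of_nonneg_left hbulk (Real.sqrt_nonneg (reTrace P))
  linarith

end Expectation

section SpectralExpectation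

variable {ι : Type*} [Fintype ι] [DecidableEq ι]

theorem hilbertSchmidtForm_ofSpectrum_sub_indicator_le (V : Matrix.unitaryGroup ι ℂ) {w : ι → ℝ}
    (hw : w ∈ stdSimplex ℝ ι) {c : ℝ} (hc : 0 ≤ c) :
    hilbertSchmidtForm (ofSpectrum V w - ofSpectrum V ({i | c < w i}.indicator w))
      (ofSpectrum V w - ofSpectrum V ({i | c < w i}.indicator w)) ≤ c := by
  rw [← map_sub, ← Set.indicator_compl, hilbertSchmidtForm_ofSpectrum]
  calc ∑ i, {i | c < w i}ᶜ.indicator w i * {i | c < w i}ᶜ.indicator w i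
      ≤ ∑ i, c * w i := Finset.sum_le_sum fun i _ => by
        by_cases hi : c < w i
        · rw [Set.indicator_of_notMem (by simpa using hi), mul_zero]
          exact mul_nonneg hc (hw.1 i)
        · rw [Set.indicator_of_mem (by simpa using hi)]
          exact mul_le_mul_of_nonneg_right (not_lt.1 hi) (hw.1 i)
    _ = c := by rw [← Finset.mul_sum, hw.2, mul_one]

theorem reTrace_ofSpectrum_indicator_compl_le (V : Matrix.unitaryGroup ι ℂ) {w : ι → ℝ}
    (hw : w ∈ stdSimplex ℝ ι) {b : ℝ} (hb : 0 < b) :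
    reTrace (ofSpectrum V ({i | w i < b}ᶜ.indicator 1)) ≤ b⁻¹ := by
  rw [reTrace_ofSpectrum, inv_eq_one_div, le_div_iff₀' hb, ← hw.2, Finset.mul_sum]
  refine Finset.sum_le_sum fun i _ => ?_
  by_cases hi : w i < b
  · rw [Set.indicator_of_notMem (by simpa using hi), mul_zero]
    exact hw.1 i
  · rw [Set.indicator_of_mem (by simpa using hi), Pi.one_apply, mul_one]
    exact not_lt.1 hi

theorem weightedMean_traceNorm_sampleMean_ofSpectrum_sub_le {α : Type*} [Fintype α] {p : α → ℝ}
    (hp : p ∈ stdSimplex ℝ α) {l : α → ι → ℝ} (hl : ∀ a, l a ∈ stdSimplex ℝ ι) {L : ι → ℝ}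
    (hL : L ∈ stdSimplex ℝ ι) {V : α → Matrix.unitaryGroup ι ℂ} {W : Matrix.unitaryGroup ι ℂ}
    (hmean : weightedMean p (fun a => ofSpectrum (V a) (l a)) = ofSpectrum W L)
    {b c : ℝ} (hb : 0 < b) (hc : 0 ≤ c) (N : ℕ) [NeZero N] :
    weightedMean (piWeight fun _ : Fin N => p)
        (fun f => traceNorm (sampleMean (fun a => ofSpectrum (V a) (l a)) f - ofSpectrum W L)) ≤
      √(b⁻¹ * (c / N)) + 2 * weightedMean p (fun a => weightedMass (l a) {i | c < l a i})
        + 2 * √(weightedMass L {i | L i < b}) := by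
  have h := weightedMean_traceNorm_sampleMean_sub_le hp
    (isStarProjection_ofSpectrum_indicator W {i | L i < b}ᶜ)
    (fun a => posSemidef_ofSpectrum (hl a).1)
    (fun a => posSemidef_ofSpectrum (Set.indicator_nonneg fun i _ => (hl a).1 i))
    (fun a => (reTrace_ofSpectrum _ _).trans (hl a).2)
    (fun a => hilbertSchmidtForm_ofSpectrum_sub_indicator_le (V a) (hl a) hc) N
  have hcut : reTrace (weightedMean p fun a =>
      ofSpectrum (V a) ({i | c < l a i}.indicator (l a))) =
        weightedMean p (fun a => weightedMass (l a) {i | c < l a i}) := by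
    simp only [map_weightedMean, reTrace_ofSpectrum, weightedMass]
  have htail : reTrace ((1 - ofSpectrum W ({i | L i < b}ᶜ.indicator 1)) * ofSpectrum W L) =
      weightedMass L {i | L i < b} := by
    rw [← map_one (ofSpectrum W), ← map_sub, ← Set.indicator_compl, compl_compl, ← map_mul,
      reTrace_ofSpectrum, weightedMass]
    simp [Set.indicator_apply]
  rw [hmean, hcut, htail] at h
  refine h.trans ?_
  gcongr
  rw [Real.sqrt_mul (by positivity)]
  gcongr
  exact reTrace_ofSpectrum_indicator_compl_le W hL hb

end SpectralExpectation

section TensorProduct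

variable {τ : Type*} [Fintype τ] {κ : τ → Type*}

/-- The tensor product `⨂ t, A t` of a family of matrices, indexed by tuples of indices. -/
def piMatrix {R : Type*} [CommMonoid R] (A : ∀ t, Matrix (κ t) (κ t) R) :
    Matrix (∀ t, κ t) (∀ t, κ t) R :=
  Matrix.of fun K L => ∏ t, A t (K t) (L t)

theorem conjTranspose_piMatrix {R : Type*} [CommMonoid R] [StarMul R]
    (A : ∀ t, Matrix (κ t) (κ t) R) :
    (piMatrix A).conjTranspose = piMatrix fun t => (A t).conjTranspose := by
  ext K L
  simp [piMatrix]

theorem piMatrix_diagonal {R : Type*} [CommMonoidWithZero R] [∀ t, DecidableEq (κ t)]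
    (w : ∀ t, κ t → R) :
    piMatrix (fun t => Matrix.diagonal (w t)) = Matrix.diagonal fun K => ∏ t, w t (K t) := by
  ext K L
  by_cases h : K = L
  · simp [piMatrix, h]
  · obtain ⟨t, ht⟩ := Function.ne_iff.1 h
    rw [Matrix.diagonal_apply_ne _ h]
    exact Finset.prod_eq_zero (Finset.mem_univ t) (Matrix.diagonal_apply_ne _ ht)

theorem piMatrix_one {R : Type*} [CommMonoidWithZero R] [∀ t, DecidableEq (κ t)] :
    piMatrix (fun t => (1 : Matrix (κ t) (κ t) R)) = 1 := by
  simpa using piMatrix_diagonal (κ := κ) fun _ _ => (1 : R)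

variable [DecidableEq τ]

theorem piMatrix_mul {R : Type*} [CommSemiring R] [∀ t, Fintype (κ t)]
    (A B : ∀ t, Matrix (κ t) (κ t) R) :
    piMatrix (fun t => A t * B t) = piMatrix A * piMatrix B := by
  ext K L
  simp only [piMatrix, Matrix.of_apply, Matrix.mul_apply, Fintype.prod_sum,
    Finset.prod_mul_distrib]

theorem exists_piMatrix_ofSpectrum [∀ t, Fintype (κ t)] [∀ t, DecidableEq (κ t)]
    (V : ∀ t, Matrix.unitaryGroup (κ t) ℂ) :
    ∃ U, ∀ w, piMatrix (fun t => ofSpectrum (V t) (w t)) = ofSpectrum U (piWeight w) := by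
  have hU : piMatrix (fun t => (V t : Matrix (κ t) (κ t) ℂ)) ∈
      Matrix.unitaryGroup (∀ t, κ t) ℂ := by
    rw [Matrix.mem_unitaryGroup_iff, Matrix.star_eq_conjTranspose, conjTranspose_piMatrix,
      ← piMatrix_mul, ← piMatrix_one]
    exact congrArg piMatrix (funext fun t => Unitary.coe_mul_star_self (V t))
  refine ⟨⟨_, hU⟩, fun w => ?_⟩
  simp only [ofSpectrum_apply, piMatrix_mul, piMatrix_diagonal, Matrix.star_eq_conjTranspose,
    conjTranspose_piMatrix, piWeight, Complex.ofReal_prod]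

theorem piMatrix_weightedMean {α : Type*} [Fintype α] (q : τ → α → ℝ)
    (X : ∀ t, α → Matrix (κ t) (κ t) ℂ) :
    piMatrix (fun t => weightedMean (q t) (X t)) =
      weightedMean (piWeight q) (fun J => piMatrix fun t => X t (J t)) := by
  ext K L
  simp [piMatrix, weightedMean, Matrix.sum_apply, Fintype.prod_sum, Finset.prod_mul_distrib,
    piWeight]

end TensorProduct

section Ensemble

variable {α ι : Type*} [Fintype α] [Fintype ι]

theorem isDensityMatrix_weightedMean {q : α → ℝ} (hq : q ∈ stdSimplex ℝ α)
    {ρs : α → Matrix ι ι ℂ} (hρs : ∀ a, IsDensityMatrix (ρs a)) :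
    IsDensityMatrix (weightedMean q ρs) := by
  refine ⟨posSemidef_weightedMean hq.1 fun a => (hρs a).1, ?_⟩
  calc (weightedMean q ρs).trace
      = weightedMean q (fun a => (ρs a).trace) :=
        map_weightedMean (Matrix.traceLinearMap ι ℝ ℂ) q ρs
    _ = 1 := by simp only [(hρs _).2, weightedMean_const hq.2]

variable [DecidableEq ι]

/-- The Holevo information `χ = S(ρ) - ∑ a, q a * S(ρₐ)` of an ensemble with average `ρ`. -/
noncomputable def holevoInformation (q : α → ℝ) (ρs : α → Matrix ι ι ℂ) : ℝ :=
  vnEntropy (weightedMean q ρs) - weightedMean q (fun a => vnEntropy (ρs a))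

theorem sqrt_two_rpow_div_le {n N : ℕ} {x y η : ℝ} (hN : (2 : ℝ) ^ (n * (x - y + 3 * η)) ≤ N) :
    √(((2 : ℝ) ^ (n * (y - η)))⁻¹ * ((2 : ℝ) ^ (n * (x + η)) / N)) ≤ √(((2 : ℝ) ^ (-η)) ^ n) := by
  apply Real.sqrt_le_sqrt
  calc ((2 : ℝ) ^ (n * (y - η)))⁻¹ * ((2 : ℝ) ^ (n * (x + η)) / N)
      ≤ ((2 : ℝ) ^ (n * (y - η)))⁻¹ *
          ((2 : ℝ) ^ (n * (x + η)) / (2 : ℝ) ^ (n * (x - y + 3 * η))) := by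
        gcongr
    _ = ((2 : ℝ) ^ (-η)) ^ n := by
        rw [← Real.rpow_neg two_pos.le, ← Real.rpow_sub two_pos, ← Real.rpow_add two_pos,
          ← Real.rpow_mul_natCast two_pos.le]
        ring_nf

theorem weightedMean_traceNorm_sampleMean_piMatrix_sub_le {q : α → ℝ}
    (hq : q ∈ stdSimplex ℝ α)
    {w : α → ι → ℝ} (hw : ∀ a, w a ∈ stdSimplex ℝ ι) {v : ι → ℝ} (hv : v ∈ stdSimplex ℝ ι)
    {V : α → Matrix.unitaryGroup ι ℂ} {W : Matrix.unitaryGroup ι ℂ}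
    (hmean : weightedMean q (fun a => ofSpectrum (V a) (w a)) = ofSpectrum W v)
    {n N : ℕ} [NeZero N] {x y η : ℝ}
    (hx : x = weightedMean (jointWeight q w) (fun z => Real.logb 2 (w z.1 z.2)))
    (hy : y = weightedMean v (fun i => Real.logb 2 (v i)))
    (hN : (2 : ℝ) ^ (n * (x - y + 3 * η)) ≤ N) :
    weightedMean (piWeight fun _ : Fin N => piWeight fun _ : Fin n => q)
        (fun f => traceNorm
          (sampleMean (fun J => piMatrix fun t => ofSpectrum (V (J t)) (w (J t))) f
            - piMatrix fun _ => ofSpectrum W v)) ≤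
      √(((2 : ℝ) ^ (-η)) ^ n)
        + 2 * weightedMass (piWeight fun _ => jointWeight q w)
            (typicalSet (jointWeight q w) (fun z => w z.1 z.2) η n)ᶜ
        + 2 * √(weightedMass (piWeight fun _ => v) (typicalSet v v η n)ᶜ) := by
  choose U hU using fun J : Fin n → α => exists_piMatrix_ofSpectrum fun t => V (J t)
  obtain ⟨Z, hZ⟩ := exists_piMatrix_ofSpectrum fun _ : Fin n => W
  have hmeanPow : weightedMean (piWeight fun _ : Fin n => q)
      (fun J => ofSpectrum (U J) (piWeight fun t => w (J t))) =
        ofSpectrum Z (piWeight fun _ => v) := by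
    simp only [← hU, ← hZ, ← hmean]
    exact (piMatrix_weightedMean (fun _ => q) fun _ a => ofSpectrum (V a) (w a)).symm
  have hjoint := (piWeight_mem_stdSimplex fun _ : Fin n => jointWeight_mem_stdSimplex hq hw).1
  have hvn := piWeight_mem_stdSimplex fun _ : Fin n => hv
  have h := weightedMean_traceNorm_sampleMean_ofSpectrum_sub_le
    (piWeight_mem_stdSimplex fun _ : Fin n => hq)
    (fun J => piWeight_mem_stdSimplex fun t => hw (J t)) hvn hmeanPow
    (b := (2 : ℝ) ^ (n * (y - η))) (c := (2 : ℝ) ^ (n * (x + η)))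
    (by positivity) (by positivity) N
  simp only [← hU, ← hZ] at h
  rw [weightedMean_weightedMass_piWeight] at h
  refine h.trans ?_
  gcongr ?_ + 2 * ?_ + 2 * √?_
  · exact sqrt_two_rpow_div_le hN
  · subst hx
    exact weightedMass_mono hjoint fun a ha _ hmem => not_le.2 ha hmem.2
  · subst hy
    exact weightedMass_mono hvn.1 fun a ha _ hmem => not_le.2 ha hmem.1

open Filter Topology in
theorem exists_tendsto_weightedMean_traceNorm_sampleMean_piMatrix_le
    {q : α → ℝ} (hq : q ∈ stdSimplex ℝ α)
    {ρs : α → Matrix ι ι ℂ} (hρs : ∀ a, IsDensityMatrix (ρs a)) {δ : ℝ} (hδ : 0 < δ) :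
    ∃ e : ℕ → ℝ, Tendsto e atTop (𝓝 0) ∧
      ∀ n N : ℕ, (2 : ℝ) ^ (n * (holevoInformation q ρs + δ)) ≤ N →
        weightedMean (piWeight fun _ : Fin N => piWeight fun _ : Fin n => q)
          (fun f => traceNorm (sampleMean (fun J => piMatrix fun t => ρs (J t)) f
            - piMatrix fun _ => weightedMean q ρs)) ≤ e n := by
  obtain ⟨W, v, hv, hWv, hSv⟩ := (isDensityMatrix_weightedMean hq hρs).exists_ofSpectrum
  choose V w hw hVw hSw using fun a => (hρs a).exists_ofSpectrum
  have hη : 0 < δ / 3 := by positivity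
  have hgeom : Tendsto (fun n : ℕ => √(((2 : ℝ) ^ (-(δ / 3))) ^ n)) atTop (𝓝 0) := by
    simpa using (tendsto_pow_atTop_nhds_zero_of_lt_one (by positivity)
      (Real.rpow_lt_one_of_one_lt_of_neg one_lt_two (neg_lt_zero.2 hη))).sqrt
  have hcond := tendsto_weightedMass_compl_typicalSet (jointWeight_mem_stdSimplex hq hw)
    (r := fun z => w z.1 z.2)
    (fun z hz => ((hw z.1).1 z.2).lt_of_ne' (right_ne_zero_of_mul hz)) hη
  have hmarg := tendsto_weightedMass_compl_typicalSet hv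
    (fun i hi => (hv.1 i).lt_of_ne' hi) hη
  have hχ : holevoInformation q ρs =
      weightedMean (jointWeight q w) (fun z => Real.logb 2 (w z.1 z.2))
        - weightedMean v (fun i => Real.logb 2 (v i)) := by
    rw [weightedMean_jointWeight, holevoInformation, hSv]
    simp [hSw, weightedMean]
    ring
  have he := (hgeom.add (hcond.const_mul 2)).add (hmarg.sqrt.const_mul 2)
  simp only [Real.sqrt_zero, mul_zero, add_zero] at he
  refine ⟨_, he, fun n N hN => ?_⟩
  have : NeZero N := ⟨by rintro rfl; exact absurd hN (by simpa using by positivity)⟩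
  rw [hχ, ← mul_div_cancel₀ δ three_ne_zero] at hN
  have hmean : weightedMean q (fun a => ofSpectrum (V a) (w a)) = ofSpectrum W v := by
    rw [hWv, funext hVw]
  simpa only [hVw, hWv] using
    weightedMean_traceNorm_sampleMean_piMatrix_sub_le hq hw hv hmean rfl rfl hN

end Ensemble

section ComplexScalars

variable {α E : Type*} [AddCommGroup E] [Module ℂ E]

theorem weightedMean_eq_sum_coe_smul [Fintype α] (p : α → ℝ) (X : α → E) :
    weightedMean p X = ∑ a, (p a : ℂ) • X a := by
  simp only [weightedMean, Complex.coe_smul]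

theorem sampleMean_eq_coe_smul_sum {N : ℕ} (X : α → E) (f : Fin N → α) :
    sampleMean X f = (N : ℂ)⁻¹ • ∑ k, X (f k) := by
  rw [sampleMean, ← Complex.coe_smul, Complex.ofReal_inv, Complex.ofReal_natCast]

end ComplexScalars

section Sampling

variable {α ι : Type*} [Fintype α] [Fintype ι] [DecidableEq ι]

theorem density_sampling_general {q : α → ℝ} (hq : q ∈ stdSimplex ℝ α)
    {ρs : α → Matrix ι ι ℂ} (hρs : ∀ a, IsDensityMatrix (ρs a)) {ε δ : ℝ} (hε : 0 < ε)
    (hδ : 0 < δ) :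
    ∃ n₀ : ℕ, ∀ n, n₀ ≤ n → ∀ N : ℕ, (2 : ℝ) ^ (n * (holevoInformation q ρs + δ)) ≤ N →
      1 - ε ≤ weightedMass (piWeight fun _ : Fin N => piWeight fun _ : Fin n => q)
        {f | traceNorm (sampleMean (fun J => piMatrix fun t => ρs (J t)) f
          - piMatrix fun _ => weightedMean q ρs) ≤ ε} := by
  obtain ⟨e, he, hmean⟩ :=
    exists_tendsto_weightedMean_traceNorm_sampleMean_piMatrix_le hq hρs hδ
  obtain ⟨n₀, hn₀⟩ := Filter.eventually_atTop.1 (he.eventually_le_const (mul_pos hε hε))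
  exact ⟨n₀, fun n hn N hN => one_sub_le_weightedMass_of_weightedMean_le
    (piWeight_mem_stdSimplex fun _ => piWeight_mem_stdSimplex fun _ => hq)
    (fun _ => traceNorm_nonneg _) hε ((hmean n N hN).trans (hn₀ n hn))⟩

end Sampling

open scoped Classical in
/-- density sampling (operator Chernoff bound for ensembles):
`N ≥ 2^{n(χ+δ)}` i.i.d. samples from the induced distribution on tensor products
`ρ_J` have average trace-norm close to `ρ^{⊗n}`, with probability at least `1 − ε`. -/
theorem density_sampling {m d : ℕ}
    (ρs : Fin m → Matrix (Fin d) (Fin d) ℂ) (hρs : ∀ j, IsDensityMatrix (ρs j))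
    (q : Fin m → ℝ) (hq : ∀ j, 0 < q j) (hqs : ∑ j, q j = 1)
    (ρ : Matrix (Fin d) (Fin d) ℂ) (hρ : ρ = ∑ j, (q j : ℂ) • ρs j)
    (χ : ℝ) (hχ : χ = vnEntropy ρ - ∑ j, q j * vnEntropy (ρs j))
    (ε δ : ℝ) (hε : 0 < ε) (hδ : 0 < δ) :
    ∃ n₀ : ℕ, ∀ n, n₀ ≤ n → ∀ N : ℕ, (2 : ℝ) ^ ((n : ℝ) * (χ + δ)) ≤ N →
      1 - ε ≤
        ∑ f ∈ Finset.univ.filter (fun f : Fin N → Fin n → Fin m =>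
            traceNorm ((N : ℂ)⁻¹ • ∑ k, tensorWord ρs (f k) - tensorPow ρ n) ≤ ε),
          ∏ k, ∏ t, q (f k t) := by
  subst hχ hρ
  have hsampling := density_sampling_general ⟨fun j => (hq j).le, hqs⟩ hρs hε hδ
  simp only [weightedMass_eq_sum_filter, sampleMean_eq_coe_smul_sum, holevoInformation,
    weightedMean_eq_sum_coe_smul q ρs] at hsampling
  exact hsampling
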